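/- Let p ≥ 1, set n = 2p, let Λ be a full-rank lattice in ℝⁿ, let α, α', β, β' > 0 be reals and let c be a nonzero real. Then Spec(Λ,α,β,p) = Spec(cΛ,α',β',p) (as functions ℝ → ℕ) if and only if {α', β'} = {c²α, c²β} as unordered pairs, where cΛ := {c·w : w ∈ Λ} is the rescaled lattice. -/

import Mathlib

open Real
open scoped RealInnerProductSpace

/-- The dual lattice `Λ* = {v : ∀ w ∈ Λ, ⟨v,w⟩ ∈ ℤ}` of a lattice `Λ ⊆ ℝⁿ`. -/
def dualLattice {n : ℕ} (L : Submodule ℤ (EuclideanSpace ℝ (Fin n))) :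
    Set (EuclideanSpace ℝ (Fin n)) :=
  {v | ∀ w ∈ L, ∃ m : ℤ, ⟪v, w⟫ = (m : ℝ)}

/-- The spectrum, with multiplicities, of the generalized Hodge-Laplace operator
`F_{αβ} = α dδ + β δd` on `p`-forms on the flat torus `ℝⁿ/Λ` (Theorem 3.9):
`x ↦ C(n-1,p-1)·#{l ∈ Λ* : 4π²α‖l‖² = x} + C(n-1,p)·#{l ∈ Λ* : 4π²β‖l‖² = x}`. -/
noncomputable def torusSpec {n : ℕ} (L : Submodule ℤ (EuclideanSpace ℝ (Fin n)))
    (α β : ℝ) (p : ℕ) : ℝ → ℕ := fun x =>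
  (n - 1).choose (p - 1) *
      Nat.card {l : EuclideanSpace ℝ (Fin n) //
        l ∈ dualLattice L ∧ 4 * π ^ 2 * α * ‖l‖ ^ 2 = x} +
    (n - 1).choose p *
      Nat.card {l : EuclideanSpace ℝ (Fin n) //
        l ∈ dualLattice L ∧ 4 * π ^ 2 * β * ‖l‖ ^ 2 = x}

/-- The rescaled lattice `cΛ = {c·w : w ∈ Λ}`. -/
noncomputable def rescaleLattice {n : ℕ} (c : ℝ) (L : Submodule ℤ (EuclideanSpace ℝ (Fin n))) :
    Submodule ℤ (EuclideanSpace ℝ (Fin n)) :=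
  L.map ((c • (LinearMap.id : EuclideanSpace ℝ (Fin n) →ₗ[ℝ]
    EuclideanSpace ℝ (Fin n))).restrictScalars ℤ)

/-!
Each of the two summands of the spectrum is a multiple of a dilate `x ↦ N (x / a)` of one function,
the number `N t` of dual lattice vectors of squared norm `t`. If `m` is the least positive squared
norm, then among the dilates by `a ≥ a₀ > 0` only the one by `a₀` is nonzero at `m * a₀`; hence the
dilates of `N` by positive numbers are linearly independent, and the spectrum determines the formal
sum `C(n-1,p-1) · [α] + C(n-1,p) · [β]`. The two coefficients agree exactly when `n = 2p`.
-/

open Filter Set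

section Dilates

variable {K R : Type*} [Field K] [LinearOrder K] [IsStrictOrderedRing K]
  [Ring R] [NoZeroDivisors R]

theorem linearIndependent_dilates {f : K → R} {m : K}
    (hm : IsLeast (Function.support f ∩ Ioi 0) m) :
    LinearIndependent R fun (a : Ioi (0 : K)) (x : K) ↦ f (x / a) := by
  obtain ⟨⟨hfm, hm_pos⟩, hm_le⟩ := hm
  rw [linearIndependent_iff]
  intro l hl
  by_contra hl_ne
  have hsupp : l.support.Nonempty := Finsupp.support_nonempty_iff.2 hl_ne
  set a₀ := l.support.min' hsupp
  have ha₀_mem : a₀ ∈ l.support := l.support.min'_mem hsupp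
  have vanish : ∀ a ∈ l.support, a ≠ a₀ → l a * f (m * a₀ / a) = 0 := by
    intro a ha hne
    have hlt : (a₀ : K) < a := (l.support.min'_le a ha).lt_of_ne hne.symm
    have ha_pos : (0 : K) < a := a.2
    have hpos : 0 < m * a₀ / a := div_pos (mul_pos hm_pos a₀.2) ha_pos
    have hlt_m : m * a₀ / a < m := by
      rw [div_lt_iff₀ ha_pos]
      exact mul_lt_mul_of_pos_left hlt hm_pos
    have hf : f (m * a₀ / a) = 0 := by
      by_contra hf
      exact (hm_le ⟨hf, hpos⟩).not_gt hlt_m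
    rw [hf, mul_zero]
  have mul_eq_zero_at_min : l a₀ * f m = 0 := by
    have h := congrFun hl (m * a₀)
    simp only [Finsupp.linearCombination_apply, Finsupp.sum, Finset.sum_apply, Pi.smul_apply,
      smul_eq_mul, Pi.zero_apply] at h
    rwa [Finset.sum_eq_single_of_mem a₀ ha₀_mem vanish, mul_div_cancel_right₀ _ a₀.2.ne'] at h
  exact mul_ne_zero (Finsupp.mem_support_iff.1 ha₀_mem) hfm mul_eq_zero_at_min

end Dilates

section NormSqCount

variable {E : Type*} [NormedAddCommGroup E]

/-- The number of elements of `S` of squared norm `t`, i.e. the coefficients of the theta series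
when `S` is a lattice; it is `0` if there are infinitely many. -/
noncomputable def normSqCount (S : Set E) (t : ℝ) : ℕ :=
  {v ∈ S | ‖v‖ ^ 2 = t}.ncard

variable [ProperSpace E] (M : Submodule ℤ E) [DiscreteTopology M]

lemma tendsto_norm_sq_cofinite_atTop : Tendsto (fun v : M ↦ ‖(v : E)‖ ^ 2) cofinite atTop :=
  (tendsto_pow_atTop two_ne_zero).comp <| tendsto_norm_cocompact_atTop.comp <|
    M.toAddSubgroup.tendsto_coe_cofinite_of_discrete ⟨‹DiscreteTopology M›⟩

lemma finite_setOf_norm_sq_eq (t : ℝ) : {v ∈ (M : Set E) | ‖v‖ ^ 2 = t}.Finite := by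
  have hfin : {v : M | ¬ t < ‖(v : E)‖ ^ 2}.Finite :=
    (tendsto_norm_sq_cofinite_atTop M).eventually_gt_atTop t
  refine (hfin.image Subtype.val).subset ?_
  rintro v ⟨hv, rfl⟩
  exact ⟨⟨v, hv⟩, lt_irrefl _, rfl⟩

lemma normSqCount_ne_zero_iff {t : ℝ} :
    normSqCount (M : Set E) t ≠ 0 ↔ ∃ v ∈ M, ‖v‖ ^ 2 = t := by
  rw [normSqCount, ← Nat.pos_iff_ne_zero, ncard_pos (finite_setOf_norm_sq_eq M t)]
  rfl

lemma exists_isLeast_support_normSqCount (hM : M ≠ ⊥) :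
    ∃ m, IsLeast (Function.support (normSqCount (M : Set E)) ∩ Ioi 0) m := by
  obtain ⟨w, hwM, hw⟩ := M.ne_bot_iff.1 hM
  obtain ⟨v, hv, hmin⟩ := (tendsto_norm_sq_cofinite_atTop M).exists_within_forall_le
    (s := {v | v ≠ 0}) ⟨⟨w, hwM⟩, by simpa using hw⟩
  refine ⟨‖v‖ ^ 2, ⟨(normSqCount_ne_zero_iff M).2 ⟨v, v.2, rfl⟩, pow_pos (norm_pos_iff.2 hv) 2⟩, ?_⟩
  rintro t ⟨ht, ht_pos⟩
  obtain ⟨u, huM, rfl⟩ := (normSqCount_ne_zero_iff M).1 ht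
  exact hmin ⟨u, huM⟩ fun hu ↦ by simp [show u = 0 from congrArg Subtype.val hu] at ht_pos

end NormSqCount

section DualSubmodule

variable {E : Type*} [NormedAddCommGroup E] [InnerProductSpace ℝ E]

lemma nondegenerate_innerₗ : (innerₗ E).Nondegenerate :=
  ⟨fun x hx ↦ inner_self_eq_zero.1 (hx x), fun x hx ↦ inner_self_eq_zero.1 (hx x)⟩

variable [FiniteDimensional ℝ E] (L : Submodule ℤ E) [DiscreteTopology L] [IsZLattice ℝ L]

lemma exists_basis_dualSubmodule_eq_span :
    ∃ b : Module.Basis (Module.Free.ChooseBasisIndex ℤ L) ℝ E,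
      LinearMap.BilinForm.dualSubmodule (innerₗ E) L = Submodule.span ℤ (range b) := by
  classical
  let b := (Module.Free.chooseBasis ℤ L).ofZLatticeBasis ℝ L
  have hspan : Submodule.span ℤ (range b) = L :=
    (Module.Free.chooseBasis ℤ L).ofZLatticeBasis_span ℝ L
  refine ⟨LinearMap.BilinForm.dualBasis (innerₗ E) nondegenerate_innerₗ b, ?_⟩
  rw [← LinearMap.BilinForm.dualSubmodule_span_of_basis, hspan]

instance discreteTopology_dualSubmodule_innerₗ :
    DiscreteTopology (LinearMap.BilinForm.dualSubmodule (innerₗ E) L) := by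
  obtain ⟨b, hb⟩ := exists_basis_dualSubmodule_eq_span L
  rw [hb]
  infer_instance

lemma dualSubmodule_innerₗ_ne_bot [Nontrivial E] :
    LinearMap.BilinForm.dualSubmodule (innerₗ E) L ≠ ⊥ := by
  obtain ⟨b, hb⟩ := exists_basis_dualSubmodule_eq_span L
  obtain ⟨i⟩ := b.index_nonempty
  rw [hb, Submodule.ne_bot_iff]
  exact ⟨b i, Submodule.subset_span (mem_range_self i), b.ne_zero i⟩

end DualSubmodule

lemma choose_pred_eq_choose_iff {n p : ℕ} (hp : 1 ≤ p) (hpn : p < n) :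
    (n - 1).choose (p - 1) = (n - 1).choose p ↔ n = 2 * p := by
  have hpos : 0 < (n - 1).choose p := Nat.choose_pos (by omega)
  have hmul : (n - 1).choose p * p = (n - 1).choose (p - 1) * (n - p) := by
    have h := Nat.choose_succ_right_eq (n - 1) (p - 1)
    rwa [Nat.sub_add_cancel hp, Nat.sub_sub_sub_cancel_right hp] at h
  constructor
  · intro h
    rw [h] at hmul
    have := Nat.eq_of_mul_eq_mul_left hpos hmul
    omega
  · rintro rfl
    rw [two_mul, Nat.add_sub_cancel] at hmul
    rw [two_mul]
    exact (Nat.eq_of_mul_eq_mul_right hp hmul).symm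

section TorusSpectrum

variable {n : ℕ} (L : Submodule ℤ (EuclideanSpace ℝ (Fin n)))

lemma dualLattice_eq_dualSubmodule :
    dualLattice L = LinearMap.BilinForm.dualSubmodule (innerₗ (EuclideanSpace ℝ (Fin n))) L := by
  ext v
  simp [dualLattice, LinearMap.BilinForm.mem_dualSubmodule, Submodule.mem_one, eq_comm]

lemma mem_dualLattice_rescaleLattice {c : ℝ} {v : EuclideanSpace ℝ (Fin n)} :
    v ∈ dualLattice (rescaleLattice c L) ↔ c • v ∈ dualLattice L := by
  simp [dualLattice, rescaleLattice, inner_smul_left, inner_smul_right]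

/-- The multiplicity of `x` as an eigenvalue of `a • Δ` on functions on the flat torus `ℝⁿ/Λ`; the
two summands of `torusSpec` are multiples of such functions. -/
noncomputable def scalarSpec (a x : ℝ) : ℕ :=
  Nat.card {l : EuclideanSpace ℝ (Fin n) // l ∈ dualLattice L ∧ 4 * π ^ 2 * a * ‖l‖ ^ 2 = x}

lemma torusSpec_apply (α β : ℝ) (p : ℕ) (x : ℝ) :
    torusSpec L α β p x =
      (n - 1).choose (p - 1) * scalarSpec L α x + (n - 1).choose p * scalarSpec L β x :=
  rfl

lemma scalarSpec_rescaleLattice {c : ℝ} (hc : c ≠ 0) (a x : ℝ) :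
    scalarSpec (rescaleLattice c L) a x = scalarSpec L (a / c ^ 2) x := by
  refine Nat.card_congr (Equiv.subtypeEquiv (Equiv.smulRight hc) fun l ↦ ?_)
  have hnorm : 4 * π ^ 2 * (a / c ^ 2) * ‖c • l‖ ^ 2 = 4 * π ^ 2 * a * ‖l‖ ^ 2 := by
    rw [norm_smul, mul_pow, Real.norm_eq_abs, sq_abs]
    field_simp
  rw [mem_dualLattice_rescaleLattice, Equiv.smulRight_apply, hnorm]

lemma torusSpec_rescaleLattice {c : ℝ} (hc : c ≠ 0) (α β : ℝ) (p : ℕ) :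
    torusSpec (rescaleLattice c L) α β p = torusSpec L (α / c ^ 2) (β / c ^ 2) p := by
  funext x
  simp only [torusSpec_apply, scalarSpec_rescaleLattice L hc]

lemma scalarSpec_eq_normSqCount {a : ℝ} (ha : a ≠ 0) (x : ℝ) :
    scalarSpec L a x = normSqCount (dualLattice L) (x / (4 * π ^ 2 * a)) := by
  refine Nat.card_congr (Equiv.subtypeEquivRight fun l ↦ and_congr_right fun _ ↦ ?_)
  rw [eq_div_iff (by positivity), mul_comm]

lemma torusSpec_eq_linearCombination (α β : Ioi (0 : ℝ)) (p : ℕ) :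
    (fun x ↦ (torusSpec L α β p x : ℤ)) =
      Finsupp.linearCombination ℤ (fun (a : Ioi (0 : ℝ)) x ↦ (scalarSpec L a x : ℤ))
        (.single α ((n - 1).choose (p - 1) : ℤ) + .single β ((n - 1).choose p : ℤ)) := by
  funext x
  simp [torusSpec_apply]

variable [DiscreteTopology L] [IsZLattice ℝ L]

lemma linearIndependent_scalarSpec [NeZero n] :
    LinearIndependent ℤ fun (a : Ioi (0 : ℝ)) (x : ℝ) ↦ (scalarSpec L a x : ℤ) := by
  obtain ⟨m, hm⟩ := exists_isLeast_support_normSqCount _ (dualSubmodule_innerₗ_ne_bot L)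
  rw [← dualLattice_eq_dualSubmodule] at hm
  have hm' : IsLeast
      (Function.support (fun t ↦ (normSqCount (dualLattice L) t : ℤ)) ∩ Ioi 0) m := by
    simpa only [Function.support, Nat.cast_ne_zero] using hm
  let scale (a : Ioi (0 : ℝ)) : Ioi (0 : ℝ) :=
    ⟨4 * π ^ 2 * a, mem_Ioi.2 (mul_pos (by positivity) a.2)⟩
  have scale_injective : Function.Injective scale := by
    intro a b h
    have h_val : 4 * π ^ 2 * (a : ℝ) = 4 * π ^ 2 * b := congrArg Subtype.val h
    exact Subtype.ext (mul_left_cancel₀ (by positivity) h_val)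
  have scalarSpec_eq_comp : (fun (a : Ioi (0 : ℝ)) (x : ℝ) ↦ (scalarSpec L a x : ℤ)) =
      (fun (a : Ioi (0 : ℝ)) x ↦ (normSqCount (dualLattice L) (x / a) : ℤ)) ∘ scale := by
    funext a x
    exact congrArg Nat.cast (scalarSpec_eq_normSqCount L a.2.ne' x)
  rw [scalarSpec_eq_comp]
  exact (linearIndependent_dilates hm').comp scale scale_injective

theorem torusSpec_eq_torusSpec_iff {p : ℕ} (hp : 1 ≤ p) (hpn : p < n) {α β α' β' : ℝ}
    (hα : 0 < α) (hβ : 0 < β) (hα' : 0 < α') (hβ' : 0 < β') :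
    torusSpec L α β p = torusSpec L α' β' p ↔
      (α = α' ∧ β = β') ∨ (n = 2 * p ∧ α = β' ∧ β = α') := by
  have : NeZero n := ⟨by omega⟩
  lift α to Ioi (0 : ℝ) using hα
  lift β to Ioi (0 : ℝ) using hβ
  lift α' to Ioi (0 : ℝ) using hα'
  lift β' to Ioi (0 : ℝ) using hβ'
  have hu : ((n - 1).choose (p - 1) : ℤ) ≠ 0 := by
    exact_mod_cast (Nat.choose_pos (by omega)).ne'
  have hv : ((n - 1).choose p : ℤ) ≠ 0 := by exact_mod_cast (Nat.choose_pos (by omega)).ne'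
  have huv : ((n - 1).choose (p - 1) : ℤ) + (n - 1).choose p ≠ 0 := by omega
  calc torusSpec L α β p = torusSpec L α' β' p
    _ ↔ (fun x ↦ (torusSpec L α β p x : ℤ)) = fun x ↦ (torusSpec L α' β' p x : ℤ) := by
      simp only [funext_iff, Nat.cast_inj]
    _ ↔ Finsupp.single α ((n - 1).choose (p - 1) : ℤ) + .single β ((n - 1).choose p : ℤ) =
        .single α' ((n - 1).choose (p - 1) : ℤ) + .single β' ((n - 1).choose p : ℤ) := by
      rw [torusSpec_eq_linearCombination, torusSpec_eq_linearCombination,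
        (linearIndependent_scalarSpec L).finsuppLinearCombination_injective.eq_iff]
    _ ↔ _ := by
      rw [Finsupp.single_add_single_eq_single_add_single hu hv, Nat.cast_inj,
        choose_pred_eq_choose_iff hp hpn]
      simp only [Subtype.ext_iff, huv, false_and, or_false]

end TorusSpectrum

theorem stmt_11_general {n p : ℕ} (hp : 1 ≤ p) (hpn : p < n)
    (L : Submodule ℤ (EuclideanSpace ℝ (Fin n))) [DiscreteTopology L] [IsZLattice ℝ L]
    {α α' β β' : ℝ} (hα : 0 < α) (hα' : 0 < α') (hβ : 0 < β) (hβ' : 0 < β')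
    {c : ℝ} (hc : c ≠ 0) :
    torusSpec L α β p = torusSpec (rescaleLattice c L) α' β' p ↔
      ((α' = c ^ 2 * α ∧ β' = c ^ 2 * β) ∨
        (n = 2 * p ∧ α' = c ^ 2 * β ∧ β' = c ^ 2 * α)) := by
  have hc2 : 0 < c ^ 2 := by positivity
  have eq_div_iff_eq_mul (a b : ℝ) : a = b / c ^ 2 ↔ b = c ^ 2 * a := by
    rw [eq_div_iff hc2.ne', mul_comm, eq_comm]
  rw [torusSpec_rescaleLattice L hc,
    torusSpec_eq_torusSpec_iff L hp hpn hα hβ (div_pos hα' hc2) (div_pos hβ' hc2)]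
  simp only [eq_div_iff_eq_mul, and_comm (a := β' = c ^ 2 * α)]

/-- Corollary 3.19 (case `n = 2p`): `F_{αβ,p}` on `ℝⁿ/Λ` and `F_{α'β',p}` on `ℝⁿ/cΛ` are
isospectral iff `{α', β'} = {c²α, c²β}` as unordered pairs. -/
theorem stmt_11 (p : ℕ) (hp : 1 ≤ p)
    (L : Submodule ℤ (EuclideanSpace ℝ (Fin (2 * p))))
    [DiscreteTopology L] [IsZLattice ℝ L]
    (α α' β β' : ℝ) (hα : 0 < α) (hα' : 0 < α') (hβ : 0 < β) (hβ' : 0 < β')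
    (c : ℝ) (hc : c ≠ 0) :
    torusSpec L α β p = torusSpec (rescaleLattice c L) α' β' p ↔
      ((α' = c ^ 2 * α ∧ β' = c ^ 2 * β) ∨ (α' = c ^ 2 * β ∧ β' = c ^ 2 * α)) := by
  simpa only [true_and] using stmt_11_general hp (by omega) L hα hα' hβ hβ' hc
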